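/- arXiv:2106.12337 — 2 statements merged into one kernel-verified Lean document; each statement's English description precedes it below -/
import Mathlib

section
/- Let d ≥ 1 and let Δ = {x ∈ ℝ^d : x_i ≥ 0 for all i, Σ_i x_i ≤ 1} be the standard d-simplex with barycentric coordinates λ₀(x) = 1 − Σ_i x_i, λ_i(x) = x_i, and element bubble b(x) = Π_{i=0}^d λ_i(x). There exists a constant c > 0, depending only on d, such that for every affine function v : ℝ^d → ℝ one has ∫_Δ |∇(b v)|² ≤ c ∫_Δ v². -/
open MeasureTheory Metric Set
open scoped ENNReal RealInnerProductSpace NNReal Classical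

noncomputable section

abbrev Euc (d : ℕ) : Type := EuclideanSpace ℝ (Fin d)

/-- `T(ω)`: Lipschitz functions on `ℝ^d` vanishing identically outside `ω`. -/
def IsTest {d : ℕ} (ω : Set (Euc d)) (φ : Euc d → ℝ) : Prop :=
  (∃ L : ℝ≥0, LipschitzWith L φ) ∧ ∀ x ∉ ω, φ x = 0

/-- `∫_ω |∇φ|²`. -/
def gradSq {d : ℕ} (ω : Set (Euc d)) (φ : Euc d → ℝ) : ℝ :=
  ∫ x in ω, ‖gradient φ x‖ ^ 2

/-- `∫_ω φ²`. -/
def sqIntg {d : ℕ} (ω : Set (Euc d)) (φ : Euc d → ℝ) : ℝ :=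
  ∫ x in ω, (φ x) ^ 2

/-- squared energy norm `‖φ‖_{E,ω}² = ∫_ω |∇φ|² + κ² ∫_ω φ²`. -/
def energySq {d : ℕ} (κ : ℝ) (ω : Set (Euc d)) (φ : Euc d → ℝ) : ℝ :=
  gradSq ω φ + κ ^ 2 * sqIntg ω φ

/-- local dual norm `‖Λ‖_{*,ω} = sup {Λφ : φ ∈ T(ω), ‖φ‖_{E,ω} ≤ 1}`. -/
def dualNorm {d : ℕ} (κ : ℝ) (ω : Set (Euc d)) (Λ : (Euc d → ℝ) → ℝ) : ℝ≥0∞ :=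
  ⨆ φ ∈ {φ : Euc d → ℝ | IsTest ω φ ∧ energySq κ ω φ ≤ 1}, ENNReal.ofReal (Λ φ)

/-- inradius: supremum of radii of balls contained in `s`. -/
def inradius {d : ℕ} (s : Set (Euc d)) : ℝ :=
  sSup {r : ℝ | ∃ c, Metric.ball c r ⊆ s}

/-- the simplex spanned by an affine basis. -/
def simT {d : ℕ} (B : AffineBasis (Fin (d+1)) ℝ (Euc d)) : Set (Euc d) :=
  convexHull ℝ (Set.range ⇑B)

/-- the face of the simplex opposite to the vertex `z`. -/
def simFace {d : ℕ} (B : AffineBasis (Fin (d+1)) ℝ (Euc d)) (z : Fin (d+1)) : Set (Euc d) :=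
  convexHull ℝ (⇑B '' {y | y ≠ z})

/-- the standard `d`-simplex. -/
def Δstd (d : ℕ) : Set (Euc d) := {x | (∀ i, 0 ≤ x i) ∧ ∑ i, x i ≤ 1}

/-- the element bubble of the standard simplex. -/
def elemBubble (d : ℕ) (x : Euc d) : ℝ := (1 - ∑ i, x i) * ∏ i, x i

/-!
On a finite-dimensional space every linear map is dominated by any injective linear map. Applied to
`v ↦ ∇(w v)` and `v ↦ v`, from affine functions to `L²(K)` for a compact set `K` and a weight `w` of
class `C¹`, this is the inverse estimate. The second map is injective when `K` has positive measure,
because the zero set of a nonzero affine function lies in a hyperplane and hence is a null set.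
-/

section FiniteDimensional

variable {𝕜 V F G : Type*} [NontriviallyNormedField 𝕜] [CompleteSpace 𝕜]
  [AddCommGroup V] [Module 𝕜 V] [FiniteDimensional 𝕜 V]
  [NormedAddCommGroup F] [NormedSpace 𝕜 F] [NormedAddCommGroup G] [NormedSpace 𝕜 G]

theorem exists_norm_le_mul_norm_of_injective (S : V →ₗ[𝕜] F) {T : V →ₗ[𝕜] G}
    (hT : Function.Injective T) : ∃ C : ℝ, 0 < C ∧ ∀ v, ‖S v‖ ≤ C * ‖T v‖ := by
  let e : V ≃ₗ[𝕜] T.range := LinearEquiv.ofInjective T hT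
  let R : T.range →L[𝕜] F := (S ∘ₗ e.symm.toLinearMap).toContinuousLinearMap
  obtain ⟨C, hC, hR⟩ := R.bound
  refine ⟨C, hC, fun v ↦ ?_⟩
  simpa [R, e] using hR (e v)

end FiniteDimensional

section Lp

variable {𝕜 V α β F G : Type*} [AddCommGroup V]
  [MeasurableSpace α] [MeasurableSpace β] {μ : Measure α} {ν : Measure β} {p q : ℝ≥0∞}
  [NormedAddCommGroup F] [NormedAddCommGroup G]

/-- The linear map into `Lᵖ(μ)` induced by a linear map into functions on `α` whose values all
have finite `Lᵖ` norm. -/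
def lpLinearMap [NormedField 𝕜] [Module 𝕜 V] [NormedSpace 𝕜 F] (A : V →ₗ[𝕜] α → F)
    (hA : ∀ v, MemLp (A v) p μ) : V →ₗ[𝕜] Lp F p μ where
  toFun v := (hA v).toLp
  map_add' u v := by simp only [map_add, MemLp.toLp_add (hA u) (hA v)]
  map_smul' c v := by simp only [map_smul, MemLp.toLp_const_smul c (hA v), RingHom.id_apply]

theorem norm_lpLinearMap_apply [NormedField 𝕜] [Module 𝕜 V] [NormedSpace 𝕜 F] [Fact (1 ≤ p)]
    (A : V →ₗ[𝕜] α → F) (hA : ∀ v, MemLp (A v) p μ) (v : V) :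
    ‖lpLinearMap A hA v‖ = lpNorm (A v) p μ :=
  (Lp.norm_toLp _ (hA v)).trans (toReal_eLpNorm (hA v).1)

theorem exists_lpNorm_le_mul_lpNorm [NontriviallyNormedField 𝕜] [CompleteSpace 𝕜] [Module 𝕜 V]
    [FiniteDimensional 𝕜 V] [NormedSpace 𝕜 F] [NormedSpace 𝕜 G] [Fact (1 ≤ p)] [Fact (1 ≤ q)]
    {A : V →ₗ[𝕜] α → F} {B : V →ₗ[𝕜] β → G} (hA : ∀ v, MemLp (A v) p μ)
    (hB : ∀ v, MemLp (B v) q ν) (hB₀ : ∀ v, B v =ᵐ[ν] 0 → v = 0) :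
    ∃ C : ℝ, 0 < C ∧ ∀ v, lpNorm (A v) p μ ≤ C * lpNorm (B v) q ν := by
  have hinj : Function.Injective (lpLinearMap B hB) :=
    (injective_iff_map_eq_zero _).2 fun v hv ↦ hB₀ v ((MemLp.toLp_eq_toLp_iff (hB v) .zero).1 hv)
  simpa only [norm_lpLinearMap_apply] using
    exists_norm_le_mul_norm_of_injective (lpLinearMap A hA) hinj

theorem lpNorm_two_sq {f : α → F} (hf : AEStronglyMeasurable f μ) :
    lpNorm f 2 μ ^ 2 = ∫ x, ‖f x‖ ^ 2 ∂μ := by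
  have h_nonneg : 0 ≤ ∫ x, ‖f x‖ ^ 2 ∂μ := integral_nonneg fun x ↦ by positivity
  rw [lpNorm_eq_integral_norm_rpow_toReal two_ne_zero ENNReal.ofNat_ne_top hf]
  simp only [ENNReal.toReal_ofNat, Real.rpow_ofNat, ← one_div, ← Real.sqrt_eq_rpow,
    Real.sq_sqrt h_nonneg]

theorem exists_integral_norm_sq_le_mul_integral_norm_sq [NontriviallyNormedField 𝕜]
    [CompleteSpace 𝕜] [Module 𝕜 V] [FiniteDimensional 𝕜 V] [NormedSpace 𝕜 F] [NormedSpace 𝕜 G]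
    {A : V →ₗ[𝕜] α → F} {B : V →ₗ[𝕜] β → G} (hA : ∀ v, MemLp (A v) 2 μ)
    (hB : ∀ v, MemLp (B v) 2 ν) (hB₀ : ∀ v, B v =ᵐ[ν] 0 → v = 0) :
    ∃ c : ℝ, 0 < c ∧ ∀ v, ∫ x, ‖A v x‖ ^ 2 ∂μ ≤ c * ∫ y, ‖B v y‖ ^ 2 ∂ν := by
  obtain ⟨C, hC, hAB⟩ := exists_lpNorm_le_mul_lpNorm hA hB hB₀
  refine ⟨C ^ 2, by positivity, fun v ↦ ?_⟩
  rw [← lpNorm_two_sq (hA v).1, ← lpNorm_two_sq (hB v).1, ← mul_pow]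
  exact pow_le_pow_left₀ lpNorm_nonneg (hAB v) 2

theorem memLp_restrict_of_isCompact {X : Type*} [TopologicalSpace X] [T2Space X]
    [MeasurableSpace X] [OpensMeasurableSpace X] {μ : Measure X} [IsFiniteMeasureOnCompacts μ]
    {K : Set X} (hK : IsCompact K) {f : X → F} (hf : ContinuousOn f K) :
    MemLp f p (μ.restrict K) := by
  have : Fact (μ K < ∞) := ⟨hK.measure_lt_top⟩
  obtain ⟨C, hC⟩ := hK.exists_bound_of_continuousOn hf
  exact .of_bound (hf.aestronglyMeasurable_of_isCompact hK hK.measurableSet) C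
    (ae_restrict_of_forall_mem hK.measurableSet hC)

end Lp

section Gradient

variable {V E : Type*} [AddCommGroup V] [Module ℝ V]
  [NormedAddCommGroup E] [InnerProductSpace ℝ E] [CompleteSpace E]

theorem continuous_gradient_of_contDiff {f : E → ℝ} (hf : ContDiff ℝ 1 f) :
    Continuous (gradient f) :=
  (InnerProductSpace.toDual ℝ E).symm.continuous.comp (hf.continuous_fderiv one_ne_zero)

/-- The linear map `v ↦ ∇(w · φ v)`, for a family `φ` of differentiable functions depending
linearly on a parameter `v` and a fixed differentiable weight `w`. -/
@[simps]
def gradientMulLinearMap (w : E → ℝ) (hw : Differentiable ℝ w) (φ : V →ₗ[ℝ] E → ℝ)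
    (hφ : ∀ v, Differentiable ℝ (φ v)) : V →ₗ[ℝ] E → E where
  toFun v := gradient fun x ↦ w x * φ v x
  map_add' u v := by
    ext1 x
    have hu' := (hw x).fun_mul (hφ u x)
    have hv' := (hw x).fun_mul (hφ v x)
    simp only [map_add, Pi.add_apply, mul_add, gradient, fderiv_fun_add hu' hv']
  map_smul' c v := by
    ext1 x
    have hv' := (hw x).fun_mul (hφ v x)
    simp [gradient, mul_left_comm, fderiv_const_mul hv']

variable [FiniteDimensional ℝ V] [MeasurableSpace E] [OpensMeasurableSpace E] {μ : Measure E}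

theorem exists_setIntegral_norm_gradient_mul_sq_le [IsFiniteMeasureOnCompacts μ] {K : Set E}
    (hK : IsCompact K) {w : E → ℝ} (hw : ContDiff ℝ 1 w) {φ : V →ₗ[ℝ] E → ℝ}
    (hφ : ∀ v, ContDiff ℝ 1 (φ v)) (hφ₀ : ∀ v, φ v =ᵐ[μ.restrict K] 0 → v = 0) :
    ∃ c : ℝ, 0 < c ∧ ∀ v, ∫ x in K, ‖gradient (fun y ↦ w y * φ v y) x‖ ^ 2 ∂μ
      ≤ c * ∫ x in K, φ v x ^ 2 ∂μ := by
  let A := gradientMulLinearMap w (hw.differentiable one_ne_zero) φ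
    fun v ↦ (hφ v).differentiable one_ne_zero
  have hA (v : V) : MemLp (A v) 2 (μ.restrict K) :=
    memLp_restrict_of_isCompact hK (continuous_gradient_of_contDiff (hw.mul (hφ v))).continuousOn
  have hB (v : V) : MemLp (φ v) 2 (μ.restrict K) :=
    memLp_restrict_of_isCompact hK (hφ v).continuous.continuousOn
  simpa only [A, gradientMulLinearMap_apply, Real.norm_eq_abs, sq_abs] using
    exists_integral_norm_sq_le_mul_integral_norm_sq hA hB hφ₀

end Gradient

section AffineMap

variable {E : Type*} [NormedAddCommGroup E] [MeasurableSpace E] [BorelSpace E]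

theorem affineMap_eq_zero_of_ae_restrict_eq_zero [NormedSpace ℝ E] [FiniteDimensional ℝ E]
    {F : Type*} [AddCommGroup F] [Module ℝ F] {μ : Measure E} [μ.IsAddHaarMeasure] {K : Set E}
    (hμK : μ K ≠ 0) {v : E →ᵃ[ℝ] F} (hv : v =ᵐ[μ.restrict K] 0) : v = 0 := by
  let Z : AffineSubspace ℝ E := (AffineSubspace.mk' (0 : F) ⊥).comap v
  have mem_Z (x : E) : x ∈ Z ↔ v x = 0 := by simp [Z]
  have hZ : Z = ⊤ := by
    by_contra hZ
    have hμZ : μ Z = 0 := Measure.addHaar_affineSubspace μ Z hZ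
    have hKZ : ∀ᵐ x ∂μ.restrict K, x ∈ Z := hv.mono fun x ↦ (mem_Z x).2
    have h_false : ∀ᵐ _ ∂μ.restrict K, False := by
      filter_upwards [hKZ, ae_restrict_of_ae (measure_eq_zero_iff_ae_notMem.1 hμZ)]
        with x hx hx' using hx' hx
    exact hμK (by simpa using h_false)
  ext x
  exact (mem_Z x).1 (hZ ▸ AffineSubspace.mem_top ℝ E x)

theorem elemBubble_inverse_estimate_general [InnerProductSpace ℝ E] [FiniteDimensional ℝ E]
    (μ : Measure E) [μ.IsAddHaarMeasure] {K : Set E} (hK : IsCompact K)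
    {w : E → ℝ} (hw : ContDiff ℝ 1 w) :
    ∃ c : ℝ, 0 < c ∧ ∀ v : E →ᵃ[ℝ] ℝ,
      ∫ x in K, ‖gradient (fun y ↦ w y * v y) x‖ ^ 2 ∂μ ≤ c * ∫ x in K, v x ^ 2 ∂μ := by
  rcases eq_or_ne (μ K) 0 with hμK | hμK
  · exact ⟨1, one_pos, fun v ↦ by simp [Measure.restrict_eq_zero.2 hμK]⟩
  let φ : (E →ᵃ[ℝ] ℝ) →ₗ[ℝ] E → ℝ :=
    { toFun := fun v ↦ v, map_add' := fun _ _ ↦ rfl, map_smul' := fun _ _ ↦ rfl }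
  have hφ (v : E →ᵃ[ℝ] ℝ) : ContDiff ℝ 1 (φ v) :=
    ContinuousAffineMap.contDiff ⟨v, v.continuous_of_finiteDimensional⟩
  exact exists_setIntegral_norm_gradient_mul_sq_le hK hw hφ
    fun v ↦ affineMap_eq_zero_of_ae_restrict_eq_zero hμK

end AffineMap

section Simplex

variable (d : ℕ)

theorem isCompact_Δstd : IsCompact (Δstd d) := by
  have h_closed : IsClosed (Δstd d) := by
    simp only [Δstd, ofPred_and, ofPred_forall]
    exact (isClosed_iInter fun i ↦ isClosed_le (by fun_prop) (by fun_prop)).inter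
      (isClosed_le (by fun_prop) (by fun_prop))
  have h_le_one {x : Euc d} (hx : x ∈ Δstd d) (i : Fin d) : x i ≤ 1 :=
    (Finset.single_le_sum (fun j _ ↦ hx.1 j) (Finset.mem_univ i)).trans hx.2
  have h_box : IsCompact (PiLp.homeomorph 2 (fun _ : Fin d ↦ ℝ) ⁻¹' Icc 0 1) :=
    (PiLp.homeomorph 2 _).isCompact_preimage.2 isCompact_Icc
  exact h_box.of_isClosed_subset h_closed fun x hx ↦ ⟨hx.1, h_le_one hx⟩

theorem contDiff_elemBubble {n : WithTop ℕ∞} : ContDiff ℝ n (elemBubble d) := by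
  unfold elemBubble
  fun_prop

end Simplex

/-- inverse estimate for the element bubble on the standard simplex.
There is `c > 0` depending only on `d` such that `∫_Δ |∇(b v)|² ≤ c ∫_Δ v²`
for every affine `v`. -/
theorem elemBubble_inverse_estimate (d : ℕ) (hd : 1 ≤ d) :
    ∃ c : ℝ, 0 < c ∧ ∀ v : Euc d →ᵃ[ℝ] ℝ,
      (∫ x in Δstd d, ‖gradient (fun y => elemBubble d y * v y) x‖ ^ 2)
        ≤ c * ∫ x in Δstd d, (v x) ^ 2 := by
  exact elemBubble_inverse_estimate_general volume (isCompact_Δstd d) (contDiff_elemBubble d)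
end
end

section
/- Let d ≥ 2, κ > 0, and let T ⊂ ℝ^d be a nondegenerate d-simplex with diameter h_T, shape parameter μ := h_T/ρ_T (ρ_T the inradius), and two distinct faces F and F' (a face is the convex hull of d of the vertices). There exists a constant C > 0 depending only on d and μ such that for every Lipschitz function φ : ℝ^d → ℝ vanishing identically on F': ∫_F φ dH^{d−1} ≤ C |F|^{1/2} min{h_T, κ^{−1}}^{1/2} ‖φ‖_{E,int T}, where |F| := H^{d−1}(F) and ‖φ‖_{E,int T}² := ∫_T |∇φ|² + κ² ∫_T φ². -/
open MeasureTheory Metric Set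
open scoped ENNReal RealInnerProductSpace NNReal Classical

noncomputable section

/-!
Translate the face `F` opposite `z` along the edge direction `e = (B z - B z') / |B z - B z'|`.
Every segment that starts at `x ∈ F` stays in `T` until it hits `F'`, after a length of at most `h`.
On such a segment `f t = φ (x + t e)` vanishes at the far end, so `f(0)²` is at most `h ∫ |f'|²`
(fundamental theorem of calculus and Cauchy–Schwarz) and at most
`-2 ∫ f f' ≤ κ⁻¹ ∫ (|f'|² + κ² f²)` (Young). Both bounds are at most
`min {h, κ⁻¹} ∫ (|f'|² + κ² f²)`.

By Fubini in the oblique coordinates `F × ℝ e`, integrating over `x ∈ F` costs the inverse of the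
cosine between `e` and the normal of `F`, namely `|B z - B z'| |∇λ_z| ≤ h |∇λ_z|`, where `λ_z` is
the barycentric coordinate of `z`. Since `λ_z` takes values in `[0, 1]` on an inscribed ball,
`|∇λ_z| ≤ 1 / ρ`, so the cost is at most the shape parameter. Cauchy–Schwarz on `F` then turns the
`L²(F)` bound into the bound on `∫_F φ`.
-/

theorem sq_integral_le_measureReal_mul_integral_sq {α : Type*} [MeasurableSpace α]
    {ν : Measure α} [IsFiniteMeasure ν] {f : α → ℝ} (hf : MemLp f 2 ν) :
    (∫ x, f x ∂ν) ^ 2 ≤ ν.real univ * ∫ x, f x ^ 2 ∂ν := by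
  have hquad (t : ℝ) :
      0 ≤ ν.real univ * (t * t) + (-2 * ∫ x, f x ∂ν) * t + ∫ x, f x ^ 2 ∂ν := by
    have hlin : Integrable (fun x => 2 * t * f x) ν := (hf.integrable one_le_two).const_mul _
    have hdiff : Integrable (fun x => f x ^ 2 - 2 * t * f x) ν := hf.integrable_sq.sub hlin
    calc 0 ≤ ∫ x, (f x - t) ^ 2 ∂ν := integral_nonneg fun x => sq_nonneg _
      _ = ∫ x, (f x ^ 2 - 2 * t * f x + t ^ 2) ∂ν := by congr with x; ring
      _ = _ := by
        rw [integral_add hdiff (integrable_const _), integral_sub hf.integrable_sq hlin,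
          integral_const_mul, integral_const, smul_eq_mul]
        ring
  have hdiscrim := discrim_le_zero hquad
  rw [discrim] at hdiscrim
  linarith

section Interval

variable {f : ℝ → ℝ} {a b κ : ℝ}

theorem sq_le_sub_mul_integral_deriv_sq (hab : a ≤ b) (hf : AbsolutelyContinuousOnInterval f a b)
    (hf' : IntervalIntegrable (fun t => deriv f t ^ 2) volume a b) (hb : f b = 0) :
    f a ^ 2 ≤ (b - a) * ∫ t in a..b, deriv f t ^ 2 := by
  have hmem : MemLp (deriv f) 2 (volume.restrict (Ioc a b)) :=
    (memLp_two_iff_integrable_sq (measurable_deriv f).aestronglyMeasurable).2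
      ((intervalIntegrable_iff_integrableOn_Ioc_of_le hab).1 hf')
  have hftc : ∫ t in Ioc a b, deriv f t = -f a := by
    rw [← intervalIntegral.integral_of_le hab, hf.integral_deriv_eq_sub, hb, zero_sub]
  have hcs := sq_integral_le_measureReal_mul_integral_sq hmem
  rwa [hftc, neg_sq, measureReal_restrict_apply_univ, Real.volume_real_Ioc_of_le hab,
    ← intervalIntegral.integral_of_le hab] at hcs

theorem sq_le_inv_mul_integral_deriv_sq_add (hab : a ≤ b)
    (hf : AbsolutelyContinuousOnInterval f a b)
    (hf' : IntervalIntegrable (fun t => deriv f t ^ 2) volume a b) (hb : f b = 0) (hκ : 0 < κ) :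
    f a ^ 2 ≤ κ⁻¹ * ∫ t in a..b, (deriv f t ^ 2 + κ ^ 2 * f t ^ 2) := by
  have hcont : ContinuousOn f (uIcc a b) := hf.continuousOn
  have hyoung (t : ℝ) :
      -(deriv f t * f t + f t * deriv f t) ≤ κ⁻¹ * (deriv f t ^ 2 + κ ^ 2 * f t ^ 2) := by
    have hsq : 0 ≤ κ⁻¹ * (deriv f t + κ * f t) ^ 2 := by positivity
    have hκκ : κ⁻¹ * κ = 1 := inv_mul_cancel₀ hκ.ne'
    linear_combination hsq + 2 * deriv f t * f t * hκκ
  calc f a ^ 2 = ∫ t in a..b, -(deriv f t * f t + f t * deriv f t) := by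
        rw [intervalIntegral.integral_neg, hf.integral_deriv_mul_eq_sub hf, hb]; ring
    _ ≤ ∫ t in a..b, κ⁻¹ * (deriv f t ^ 2 + κ ^ 2 * f t ^ 2) := by
        refine intervalIntegral.integral_mono_on hab ?_ ?_ fun t _ => hyoung t
        · exact ((hf.intervalIntegrable_deriv.mul_continuousOn hcont).add
            (hf.intervalIntegrable_deriv.continuousOn_mul hcont)).neg
        · exact (hf'.add ((hcont.pow 2).intervalIntegrable.const_mul _)).const_mul _
    _ = _ := intervalIntegral.integral_const_mul _ _

theorem sq_le_min_mul_integral_deriv_sq_add (hab : a ≤ b)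
    (hf : AbsolutelyContinuousOnInterval f a b)
    (hf' : IntervalIntegrable (fun t => deriv f t ^ 2) volume a b) (hb : f b = 0) (hκ : 0 < κ) :
    f a ^ 2 ≤ min (b - a) κ⁻¹ * ∫ t in a..b, (deriv f t ^ 2 + κ ^ 2 * f t ^ 2) := by
  rcases min_choice (b - a) κ⁻¹ with hmin | hmin <;> rw [hmin]
  · refine (sq_le_sub_mul_integral_deriv_sq hab hf hf' hb).trans ?_
    refine mul_le_mul_of_nonneg_left ?_ (sub_nonneg.2 hab)
    exact intervalIntegral.integral_mono_on hab hf'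
      (hf'.add ((hf.continuousOn.pow 2).intervalIntegrable.const_mul _))
      fun t _ => le_add_of_nonneg_right (by positivity)
  · exact sq_le_inv_mul_integral_deriv_sq_add hab hf hf' hb hκ

end Interval

theorem intervalIntegrable_deriv_sq_of_lipschitzWith {f : ℝ → ℝ} {L : ℝ≥0}
    (hf : LipschitzWith L f) (a b : ℝ) :
    IntervalIntegrable (fun t => deriv f t ^ 2) volume a b := by
  refine (intervalIntegrable_const (c := (L : ℝ) ^ 2)).mono_fun
    ((measurable_deriv f).pow_const 2).aestronglyMeasurable (ae_of_all _ fun t => ?_)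
  simp only [norm_pow, NNReal.norm_eq]
  gcongr
  exact norm_deriv_le_of_lipschitz hf

/-- The integrand `|∇φ|² + κ²φ²` of the squared energy norm, with `|∇φ|` expressed as the operator
norm of the Fréchet derivative so that it makes sense on any normed space. -/
def energyDensity {E : Type*} [NormedAddCommGroup E] [NormedSpace ℝ E] (κ : ℝ) (φ : E → ℝ)
    (x : E) : ℝ :=
  ‖fderiv ℝ φ x‖ ^ 2 + κ ^ 2 * φ x ^ 2

theorem energyDensity_nonneg {E : Type*} [NormedAddCommGroup E] [NormedSpace ℝ E] (κ : ℝ)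
    (φ : E → ℝ) (x : E) : 0 ≤ energyDensity κ φ x := by
  unfold energyDensity
  positivity

section Energy

variable {E : Type*} [NormedAddCommGroup E] [NormedSpace ℝ E] [MeasurableSpace E] [BorelSpace E]
  {ν : Measure E} [IsFiniteMeasureOnCompacts ν] {φ : E → ℝ} {L : ℝ≥0} {s : Set E}

theorem integrableOn_norm_fderiv_sq_of_lipschitzWith (hφ : LipschitzWith L φ)
    (hs : IsCompact s) :
    IntegrableOn (fun x => ‖fderiv ℝ φ x‖ ^ 2) s ν := by
  refine Measure.integrableOn_of_bounded (M := (L : ℝ) ^ 2) hs.measure_lt_top.ne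
    ((measurable_fderiv ℝ φ).norm.pow_const 2).aestronglyMeasurable (ae_of_all _ fun x => ?_)
  rw [norm_pow, norm_norm]
  gcongr
  exact norm_fderiv_le_of_lipschitz ℝ hφ

theorem integrableOn_energyDensity (hφ : LipschitzWith L φ) (hs : IsCompact s) (κ : ℝ) :
    IntegrableOn (energyDensity κ φ) s ν :=
  (integrableOn_norm_fderiv_sq_of_lipschitzWith hφ hs).add
    (((hφ.continuous.pow 2).continuousOn.integrableOn_compact hs).const_mul _)

end Energy

section Line

variable {E : Type*} [NormedAddCommGroup E] [NormedSpace ℝ E] {φ : E → ℝ} {x e : E}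

theorem deriv_line_sq_le (he : ‖e‖ ≤ 1) {t : ℝ}
    (hφ : DifferentiableAt ℝ φ (x + t • e)) :
    deriv (fun t : ℝ => φ (x + t • e)) t ^ 2 ≤ ‖fderiv ℝ φ (x + t • e)‖ ^ 2 := by
  have hline : HasDerivAt (fun t : ℝ => x + t • e) e t := by
    simpa using ((hasDerivAt_id t).smul_const e).const_add x
  have hderiv : HasDerivAt (fun t : ℝ => φ (x + t • e)) (fderiv ℝ φ (x + t • e) e) t :=
    hφ.hasFDerivAt.comp_hasDerivAt t hline
  rw [hderiv.deriv, ← sq_abs]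
  gcongr
  exact (fderiv ℝ φ (x + t • e)).unit_le_opNorm e he

theorem ofReal_sq_le_min_mul_lintegral_energyDensity (he : ‖e‖ ≤ 1) {L : ℝ≥0}
    (hφ : LipschitzWith L φ) {s κ : ℝ} (hs : 0 ≤ s) (hκ : 0 < κ) (hzero : φ (x + s • e) = 0)
    (hdiff : ∀ᵐ t : ℝ, DifferentiableAt ℝ φ (x + t • e)) :
    ENNReal.ofReal (φ x ^ 2) ≤ ENNReal.ofReal (min s κ⁻¹) *
      ∫⁻ t in Ioc 0 s, ENNReal.ofReal (energyDensity κ φ (x + t • e)) := by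
  set ψ : ℝ → ℝ := fun t => φ (x + t • e)
  have hψ : LipschitzWith (L * ‖e‖₊) ψ :=
    hφ.comp <| LipschitzWith.of_dist_le_mul fun t u => by
      simp [dist_eq_norm, ← sub_smul, norm_smul, mul_comm]
  have hψ' := intervalIntegrable_deriv_sq_of_lipschitzWith hψ 0 s
  have hint : IntervalIntegrable (fun t => deriv ψ t ^ 2 + κ ^ 2 * ψ t ^ 2) volume 0 s :=
    hψ'.add (((hψ.continuous.pow 2).intervalIntegrable _ _).const_mul _)
  have hreal := sq_le_min_mul_integral_deriv_sq_add hs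
    hψ.lipschitzOnWith.absolutelyContinuousOnInterval hψ' hzero hκ
  calc ENNReal.ofReal (φ x ^ 2) = ENNReal.ofReal (ψ 0 ^ 2) := by simp [ψ]
    _ ≤ ENNReal.ofReal (min s κ⁻¹ * ∫ t in 0..s, (deriv ψ t ^ 2 + κ ^ 2 * ψ t ^ 2)) := by
        rw [sub_zero] at hreal
        exact ENNReal.ofReal_le_ofReal hreal
    _ = ENNReal.ofReal (min s κ⁻¹) *
          ∫⁻ t in Ioc 0 s, ENNReal.ofReal (deriv ψ t ^ 2 + κ ^ 2 * ψ t ^ 2) := by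
        rw [ENNReal.ofReal_mul (by positivity), intervalIntegral.integral_of_le hs,
          ofReal_integral_eq_lintegral_ofReal
            ((intervalIntegrable_iff_integrableOn_Ioc_of_le hs).1 hint)
            (ae_of_all _ fun t => by positivity)]
    _ ≤ _ := by
        refine mul_le_mul' le_rfl (lintegral_mono_ae ?_)
        filter_upwards [ae_restrict_of_ae hdiff] with t ht
        exact ENNReal.ofReal_le_ofReal (add_le_add_left (deriv_line_sq_le he ht) _)

end Line

section Hyperplane

variable {E : Type*} [NormedAddCommGroup E] [InnerProductSpace ℝ E] [FiniteDimensional ℝ E]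
  [MeasurableSpace E] [BorelSpace E]

theorem map_volume_add_submodule (W : Submodule ℝ E) (p : E) :
    (volume : Measure W).map (fun w : W => p + w) =
      μHE[Module.finrank ℝ W].restrict (AffineSubspace.mk' p W) := by
  have hisometry : Isometry fun w : W => p + w :=
    (isometry_add_left p).comp isometry_subtype_coe
  have hrange : range (fun w : W => p + w) = AffineSubspace.mk' p W := by
    ext y
    simp [AffineSubspace.mem_mk', ← eq_sub_iff_add_eq']
  rw [← InnerProductSpace.euclideanHausdorffMeasure_eq_volume,
    hisometry.map_euclideanHausdorffMeasure, hrange]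

theorem setLIntegral_eq_lintegral_submodule {W : Submodule ℝ E} {p : E} {F : Set E}
    (hF : MeasurableSet F) (hFp : F ⊆ AffineSubspace.mk' p W) {f : E → ℝ≥0∞} (hf : Measurable f) :
    ∫⁻ x in F, f x ∂μHE[Module.finrank ℝ W] = ∫⁻ w : W, F.indicator f (p + w) := by
  rw [← lintegral_map (hf.indicator hF) (by fun_prop), map_volume_add_submodule,
    lintegral_indicator hF, Measure.restrict_restrict hF, inter_eq_left.2 hFp]

theorem euclideanHausdorffMeasure_lt_top_of_isCompact {W : Submodule ℝ E} {p : E} {F : Set E}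
    (hF : IsCompact F) (hFp : F ⊆ AffineSubspace.mk' p W) : μHE[Module.finrank ℝ W] F < ∞ := by
  have hclosed : Topology.IsClosedEmbedding fun w : W => p + w :=
    ((isometry_add_left p).comp W.subtypeₗᵢ.isometry).isClosedEmbedding
  rw [← Measure.restrict_eq_self _ hFp, ← map_volume_add_submodule,
    Measure.map_apply (by fun_prop) hF.measurableSet]
  exact (hclosed.isCompact_preimage hF).measure_lt_top

theorem measurePreserving_orthogonal_add_smul {n : E} (hn : ‖n‖ = 1) :
    MeasurePreserving fun q : (ℝ ∙ n)ᗮ × ℝ => (q.1 : E) + q.2 • n := by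
  have hsplit := ((ℝ ∙ n).measurePreserving_measurableEquivProd (0 : E)).symm
  rw [InnerProductSpace.euclideanHausdorffMeasure_eq_volume] at hsplit
  have hline := (LinearIsometryEquiv.toSpanUnitSingleton n hn).measurePreserving
  convert hsplit.comp ((hline.prod (MeasurePreserving.id (volume : Measure (ℝ ∙ n)ᗮ))).comp
    Measure.measurePreserving_swap) using 2
  · simp [add_comm]
  · exact Measure.volume_eq_prod _ _

-- The transvection `y ↦ y + ⟪n, y⟫ (v - n)` fixes `n⊥`, sends `n` to `v` and has
-- determinant `⟪n, v⟫`.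
theorem map_volume_orthogonal_add_smul {n v : E} (hn : ‖n‖ = 1) (hnv : ⟪n, v⟫ ≠ 0) (p : E) :
    (volume : Measure ((ℝ ∙ n)ᗮ × ℝ)).map (fun q => p + q.1 + q.2 • v) =
      ENNReal.ofReal |⟪n, v⟫|⁻¹ • volume := by
  set τ : E →ₗ[ℝ] E := LinearMap.transvection (innerₛₗ ℝ n) (v - n)
  have hdet : LinearMap.det τ = ⟪n, v⟫ := by
    simp [τ, LinearMap.transvection.det, inner_sub_right, hn]
  have hτm : Measurable τ := τ.continuous_of_finiteDimensional.measurable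
  have hperp := measurePreserving_orthogonal_add_smul hn
  have hcomp : (fun q : (ℝ ∙ n)ᗮ × ℝ => p + q.1 + q.2 • v) =
      (fun y => p + y) ∘ τ ∘ fun q => (q.1 : E) + q.2 • n := by
    funext q
    have horth : ⟪n, (q.1 : E)⟫ = 0 := Submodule.mem_orthogonal_singleton_iff_inner_right.1 q.1.2
    simp only [Function.comp_apply, τ, LinearMap.transvection.apply, innerₛₗ_apply_apply,
      inner_add_right, inner_smul_right, horth, real_inner_self_eq_norm_sq, hn]
    module
  rw [hcomp, ← Measure.map_map (by fun_prop) (hτm.comp hperp.measurable),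
    ← Measure.map_map hτm hperp.measurable, hperp.map_eq,
    Measure.map_linearMap_addHaar_eq_smul_addHaar _ (hdet ▸ hnv), Measure.map_smul,
    (measurePreserving_add_left volume p).map_eq, hdet, abs_inv]

theorem lintegral_orthogonal_lintegral_add_smul {n v : E} (hn : ‖n‖ = 1) (hnv : ⟪n, v⟫ ≠ 0)
    (p : E) {f : E → ℝ≥0∞} (hf : Measurable f) :
    ∫⁻ w : (ℝ ∙ n)ᗮ, ∫⁻ t : ℝ, f (p + w + t • v) = ENNReal.ofReal |⟪n, v⟫|⁻¹ * ∫⁻ y, f y := by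
  have hslice : Measurable fun q : (ℝ ∙ n)ᗮ × ℝ => p + q.1 + q.2 • v := by fun_prop
  rw [← smul_eq_mul, ← lintegral_smul_measure, ← map_volume_orthogonal_add_smul hn hnv p,
    lintegral_map hf hslice, Measure.volume_eq_prod, lintegral_prod _ (by fun_prop)]

theorem ae_orthogonal_ae_add_smul {n v : E} (hn : ‖n‖ = 1) (hnv : ⟪n, v⟫ ≠ 0) (p : E)
    {P : E → Prop} (hP : ∀ᵐ y, P y) : ∀ᵐ w : (ℝ ∙ n)ᗮ, ∀ᵐ t : ℝ, P (p + w + t • v) := by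
  have hslice : Measurable fun q : (ℝ ∙ n)ᗮ × ℝ => p + q.1 + q.2 • v := by fun_prop
  refine Measure.ae_ae_of_ae_prod (ae_of_ae_map hslice.aemeasurable ?_)
  rw [← Measure.volume_eq_prod, map_volume_orthogonal_add_smul hn hnv p]
  exact Measure.ae_smul_measure hP _

theorem setLIntegral_sq_le_min_mul_setLIntegral_energyDensity {n e p : E} (hn : ‖n‖ = 1)
    (he : ‖e‖ ≤ 1) (hne : ⟪n, e⟫ ≠ 0) {φ : E → ℝ} {L : ℝ≥0} (hφ : LipschitzWith L φ) {κ h : ℝ}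
    (hκ : 0 < κ) {F ω : Set E} (hF : MeasurableSet F) (hω : MeasurableSet ω)
    (hFp : F ⊆ AffineSubspace.mk' p (ℝ ∙ n)ᗮ)
    (hray : ∀ x ∈ F, ∃ s ∈ Icc 0 h, φ (x + s • e) = 0 ∧ ∀ t ∈ Ioc 0 s, x + t • e ∈ ω) :
    ∫⁻ x in F, ENNReal.ofReal (φ x ^ 2) ∂μHE[Module.finrank ℝ (ℝ ∙ n)ᗮ] ≤
      ENNReal.ofReal (min h κ⁻¹) * (ENNReal.ofReal |⟪n, e⟫|⁻¹ *
        ∫⁻ y in ω, ENNReal.ofReal (energyDensity κ φ y)) := by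
  set G : E → ℝ≥0∞ := fun y => ENNReal.ofReal (energyDensity κ φ y)
  have hφm : Measurable φ := hφ.continuous.measurable
  have hG : Measurable G := by unfold G energyDensity; fun_prop
  have hray_le : ∀ᵐ w : (ℝ ∙ n)ᗮ, F.indicator (fun x => ENNReal.ofReal (φ x ^ 2)) (p + w) ≤
      ENNReal.ofReal (min h κ⁻¹) * ∫⁻ t : ℝ, ω.indicator G (p + w + t • e) := by
    filter_upwards [ae_orthogonal_ae_add_smul hn hne p hφ.ae_differentiableAt] with w hw
    refine indicator_apply_le' (fun hwF => ?_) fun _ => zero_le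
    obtain ⟨s, ⟨hs₀, hsh⟩, hzero, hsω⟩ := hray _ hwF
    refine (ofReal_sq_le_min_mul_lintegral_energyDensity he hφ hs₀ hκ hzero hw).trans ?_
    refine mul_le_mul' (by gcongr) ?_
    rw [← lintegral_indicator measurableSet_Ioc]
    exact lintegral_mono fun t => indicator_apply_le'
      (fun ht => (indicator_of_mem (hsω t ht) G).ge) fun _ => zero_le
  calc ∫⁻ x in F, ENNReal.ofReal (φ x ^ 2) ∂μHE[Module.finrank ℝ (ℝ ∙ n)ᗮ]
      = ∫⁻ w : (ℝ ∙ n)ᗮ, F.indicator (fun x => ENNReal.ofReal (φ x ^ 2)) (p + w) :=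
        setLIntegral_eq_lintegral_submodule hF hFp (by fun_prop)
    _ ≤ _ := lintegral_mono_ae hray_le
    _ = _ := by
        rw [lintegral_const_mul' _ _ ENNReal.ofReal_ne_top,
          lintegral_orthogonal_lintegral_add_smul hn hne p (hG.indicator hω),
          lintegral_indicator hω]

theorem setLIntegral_sq_le_of_inner_eq_one {g v p : E} (hgv : ⟪g, v⟫ = 1) {φ : E → ℝ} {L : ℝ≥0}
    (hφ : LipschitzWith L φ) {κ : ℝ} (hκ : 0 < κ) {F ω : Set E} (hF : MeasurableSet F)
    (hω : MeasurableSet ω) (hFp : F ⊆ AffineSubspace.mk' p (ℝ ∙ g)ᗮ)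
    (hray : ∀ x ∈ F, ∃ s ∈ Icc (0 : ℝ) 1, φ (x + s • v) = 0 ∧ ∀ t ∈ Ioc 0 s, x + t • v ∈ ω) :
    ∫⁻ x in F, ENNReal.ofReal (φ x ^ 2) ∂μHE[Module.finrank ℝ (ℝ ∙ g)ᗮ] ≤
      ENNReal.ofReal (min ‖v‖ κ⁻¹) * (ENNReal.ofReal (‖v‖ * ‖g‖) *
        ∫⁻ y in ω, ENNReal.ofReal (energyDensity κ φ y)) := by
  have hg : g ≠ 0 := fun hzero => by simp [hzero] at hgv
  have hv : v ≠ 0 := fun hzero => by simp [hzero] at hgv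
  have hg_pos : 0 < ‖g‖ := norm_pos_iff.2 hg
  have hv_pos : 0 < ‖v‖ := norm_pos_iff.2 hv
  have hn : ‖‖g‖⁻¹ • g‖ = 1 := norm_smul_inv_norm (𝕜 := ℝ) hg
  have he : ‖‖v‖⁻¹ • v‖ = 1 := norm_smul_inv_norm (𝕜 := ℝ) hv
  have hinner : ⟪‖g‖⁻¹ • g, ‖v‖⁻¹ • v⟫ = (‖v‖ * ‖g‖)⁻¹ := by
    rw [real_inner_smul_left, inner_smul_right, hgv, mul_one, mul_inv, mul_comm]
  have hne : ⟪‖g‖⁻¹ • g, ‖v‖⁻¹ • v⟫ ≠ 0 := by rw [hinner]; positivity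
  have hspan : (ℝ ∙ ‖g‖⁻¹ • g) = ℝ ∙ g :=
    Submodule.span_singleton_smul_eq (isUnit_iff_ne_zero.2 (inv_ne_zero hg_pos.ne')) g
  rw [← hspan] at hFp ⊢
  have htrace := setLIntegral_sq_le_min_mul_setLIntegral_energyDensity (h := ‖v‖) hn he.le hne hφ hκ
    hF hω hFp fun x hx => by
      obtain ⟨s, ⟨hs₀, hs₁⟩, hzero, hmem⟩ := hray x hx
      refine ⟨s * ‖v‖, ⟨by positivity, mul_le_of_le_one_left hv_pos.le hs₁⟩, ?_, fun t ht => ?_⟩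
      · rwa [smul_smul, mul_inv_cancel_right₀ hv_pos.ne']
      · rw [smul_smul]
        exact hmem _ ⟨mul_pos ht.1 (inv_pos.2 hv_pos), (mul_inv_le_iff₀ hv_pos).2 ht.2⟩
  rwa [hinner, abs_inv, inv_inv, abs_of_pos (by positivity)] at htrace

end Hyperplane

section Barycentric

variable {ι V : Type*} [AddCommGroup V] [Module ℝ V] (b : AffineBasis ι ℝ V)

theorem coord_add_smul_sub (i j k : ι) (x : V) (t : ℝ) :
    b.coord i (x + t • (b j - b k)) =
      b.coord i x + t * (b.coord i (b j) - b.coord i (b k)) := by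
  have hvadd := (b.coord i).map_vadd x (t • (b j - b k))
  have hvsub := (b.coord i).linearMap_vsub (b j) (b k)
  simp only [vadd_eq_add, vsub_eq_sub, map_smul, smul_eq_mul] at hvadd hvsub
  rw [add_comm x, hvadd, hvsub, add_comm]

theorem mem_convexHull_image_ne_iff [Finite ι] {i : ι} {x : V} :
    x ∈ convexHull ℝ (b '' {j | j ≠ i}) ↔ (∀ j, 0 ≤ b.coord j x) ∧ b.coord i x = 0 := by
  cases nonempty_fintype ι
  refine ⟨fun hx => ⟨?_, ?_⟩, fun ⟨hnonneg, hi⟩ => ?_⟩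
  · have hxT := convexHull_mono (image_subset_range b _) hx
    rwa [b.convexHull_eq_nonneg_coord] at hxT
  · refine convexHull_min (t := b.coord i ⁻¹' {0}) ?_
      ((convex_singleton (0 : ℝ)).affine_preimage _) hx
    rintro _ ⟨j, hj, rfl⟩
    exact b.coord_apply_ne (Ne.symm hj)
  · rw [← b.linear_combination_coord_eq_self x,
      ← Finset.sum_erase Finset.univ (a := i) (by rw [hi, zero_smul])]
    refine (convex_convexHull ℝ _).sum_mem (fun j _ => hnonneg j) ?_ fun j hj =>
      subset_convexHull ℝ _ (mem_image_of_mem b (Finset.ne_of_mem_erase hj))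
    rw [Finset.sum_erase (f := fun j => b.coord j x) _ hi, b.sum_coord_apply_eq_one]

end Barycentric

section CoordGradient

variable {ι E : Type*} [NormedAddCommGroup E] [InnerProductSpace ℝ E] [FiniteDimensional ℝ E]

/-- The (constant) gradient of the `i`-th barycentric coordinate. It is orthogonal to the facet
opposite to the `i`-th vertex, and its norm is the reciprocal of the altitude above that facet. -/
def coordGradient (b : AffineBasis ι ℝ E) (i : ι) : E :=
  (InnerProductSpace.toDual ℝ E).symm (b.coord i).linear.toContinuousLinearMap

variable (b : AffineBasis ι ℝ E)

theorem inner_coordGradient_sub (i : ι) (x y : E) :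
    ⟪coordGradient b i, x - y⟫ = b.coord i x - b.coord i y := by
  rw [coordGradient, InnerProductSpace.toDual_symm_apply]
  exact (b.coord i).linearMap_vsub x y

theorem inner_coordGradient_edge {i j : ι} (hij : i ≠ j) :
    ⟪coordGradient b i, b i - b j⟫ = 1 := by
  rw [inner_coordGradient_sub, b.coord_apply_eq, b.coord_apply_ne hij, sub_zero]

theorem norm_coordGradient_pos {i j : ι} (hij : i ≠ j) : 0 < ‖coordGradient b i‖ :=
  norm_pos_iff.2 fun hzero => by simpa [hzero] using inner_coordGradient_edge b hij

end CoordGradient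

section Simplex

variable {d : ℕ} {B : AffineBasis (Fin (d + 1)) ℝ (Euc d)} {z z' : Fin (d + 1)} {x : Euc d}

theorem mem_simT_iff : x ∈ simT B ↔ ∀ i, 0 ≤ B.coord i x := by
  rw [simT, B.convexHull_eq_nonneg_coord, mem_ofPred_eq]

theorem mem_simFace_iff : x ∈ simFace B z ↔ (∀ i, 0 ≤ B.coord i x) ∧ B.coord z x = 0 :=
  mem_convexHull_image_ne_iff B

theorem isCompact_simT (B : AffineBasis (Fin (d + 1)) ℝ (Euc d)) : IsCompact (simT B) :=
  (finite_range B).isCompact_convexHull (𝕜 := ℝ)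

theorem isCompact_simFace (B : AffineBasis (Fin (d + 1)) ℝ (Euc d)) (z : Fin (d + 1)) :
    IsCompact (simFace B z) :=
  ((toFinite _).image _).isCompact_convexHull (𝕜 := ℝ)

theorem coord_le_one_of_mem_simT (hx : x ∈ simT B) (i : Fin (d + 1)) : B.coord i x ≤ 1 :=
  B.sum_coord_apply_eq_one x ▸
    Finset.single_le_sum (fun j _ => mem_simT_iff.1 hx j) (Finset.mem_univ i)

theorem add_smul_edge_mem_simT (hzz' : z ≠ z') (hx : x ∈ simT B) {t : ℝ}
    (ht : t ∈ Icc 0 (B.coord z' x)) : x + t • (B z - B z') ∈ simT B := by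
  refine mem_simT_iff.2 fun i => ?_
  have hi := mem_simT_iff.1 hx i
  obtain ⟨ht₀, ht₁⟩ := ht
  rw [coord_add_smul_sub, B.coord_apply, B.coord_apply]
  rcases eq_or_ne i z' with rfl | hiz'
  · simpa [hzz'.symm] using ht₁
  · rw [if_neg hiz']
    split_ifs <;> linarith

theorem add_coord_smul_edge_mem_simFace (hzz' : z ≠ z') (hx : x ∈ simT B) :
    x + B.coord z' x • (B z - B z') ∈ simFace B z' := by
  have hnonneg : 0 ≤ B.coord z' x := mem_simT_iff.1 hx z'
  refine mem_simFace_iff.2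
    ⟨mem_simT_iff.1 (add_smul_edge_mem_simT hzz' hx (right_mem_Icc.2 hnonneg)), ?_⟩
  rw [coord_add_smul_sub, B.coord_apply_eq, B.coord_apply_ne hzz'.symm]
  ring

theorem norm_edge_le_diam_simT (B : AffineBasis (Fin (d + 1)) ℝ (Euc d)) (z z' : Fin (d + 1)) :
    ‖B z - B z'‖ ≤ diam (simT B) := by
  have hvertex (i : Fin (d + 1)) : B i ∈ simT B := subset_convexHull ℝ _ (mem_range_self i)
  rw [← dist_eq_norm]
  exact dist_le_diam_of_mem (isCompact_simT B).isBounded (hvertex z) (hvertex z')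

theorem simFace_subset_mk' (hzz' : z ≠ z') :
    simFace B z ⊆ AffineSubspace.mk' (B z') (ℝ ∙ coordGradient B z)ᗮ := by
  intro x hx
  rw [SetLike.mem_coe, AffineSubspace.mem_mk', vsub_eq_sub,
    Submodule.mem_orthogonal_singleton_iff_inner_right, inner_coordGradient_sub,
    (mem_simFace_iff.1 hx).2, B.coord_apply_ne hzz', sub_zero]

theorem radius_mul_norm_coordGradient_le_one {c : Euc d} {r : ℝ} (hball : ball c r ⊆ simT B)
    (z : Fin (d + 1)) : r * ‖coordGradient B z‖ ≤ 1 := by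
  set g := coordGradient B z
  rcases le_or_gt r 0 with hr | hr
  · nlinarith [norm_nonneg g]
  rcases eq_or_ne g 0 with hg | hg
  · simp [hg]
  have hclosed : closedBall c r ⊆ simT B := by
    rw [← closure_ball c hr.ne']
    exact (isCompact_simT B).isClosed.closure_subset_iff.2 hball
  have hg_norm : 0 < ‖g‖ := norm_pos_iff.2 hg
  set y : Euc d := c + (r / ‖g‖) • g
  have hy : y ∈ simT B := hclosed <| by
    simp [y, norm_smul, abs_of_pos hr, hg_norm.ne']
  have hc : c ∈ simT B := hball (mem_ball_self hr)
  calc r * ‖g‖ = ⟪g, y - c⟫ := by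
        rw [add_sub_cancel_left, inner_smul_right, real_inner_self_eq_norm_sq]
        field_simp
    _ = B.coord z y - B.coord z c := inner_coordGradient_sub B z y c
    _ ≤ 1 := by linarith [coord_le_one_of_mem_simT hy z, mem_simT_iff.1 hc z]

theorem inradius_nonneg (s : Set (Euc d)) : 0 ≤ inradius s :=
  Real.sSup_nonneg' ⟨0, ⟨0, by simp⟩, le_rfl⟩

theorem inradius_mul_norm_coordGradient_le_one (B : AffineBasis (Fin (d + 1)) ℝ (Euc d))
    (z : Fin (d + 1)) : inradius (simT B) * ‖coordGradient B z‖ ≤ 1 := by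
  rcases (norm_nonneg (coordGradient B z)).eq_or_lt with hzero | hpos
  · simp [← hzero]
  rw [← le_div_iff₀ hpos]
  refine csSup_le ⟨0, 0, by simp⟩ fun r ⟨c, hball⟩ => ?_
  rw [le_div_iff₀ hpos]
  exact radius_mul_norm_coordGradient_le_one hball z

theorem diam_mul_norm_coordGradient_le {μ : ℝ} (hμ : diam (simT B) ≤ μ * inradius (simT B))
    (z : Fin (d + 1)) : diam (simT B) * ‖coordGradient B z‖ ≤ |μ| :=
  calc diam (simT B) * ‖coordGradient B z‖
      ≤ |μ| * inradius (simT B) * ‖coordGradient B z‖ := by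
        gcongr
        exact hμ.trans (mul_le_mul_of_nonneg_right (le_abs_self μ) (inradius_nonneg _))
    _ = |μ| * (inradius (simT B) * ‖coordGradient B z‖) := mul_assoc _ _ _
    _ ≤ |μ| := mul_le_of_le_one_right (abs_nonneg μ) (inradius_mul_norm_coordGradient_le_one B z)

theorem finrank_orthogonal_coordGradient (hzz' : z ≠ z') :
    Module.finrank ℝ (ℝ ∙ coordGradient B z)ᗮ = d - 1 := by
  have hsum := (ℝ ∙ coordGradient B z).finrank_add_finrank_orthogonal
  rw [finrank_span_singleton (norm_pos_iff.1 (norm_coordGradient_pos B hzz')),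
    finrank_euclideanSpace_fin] at hsum
  omega

theorem euclideanHausdorffMeasure_simFace_lt_top (hzz' : z ≠ z') :
    μHE[d - 1] (simFace B z) < ∞ :=
  finrank_orthogonal_coordGradient (B := B) hzz' ▸
    euclideanHausdorffMeasure_lt_top_of_isCompact (isCompact_simFace B z) (simFace_subset_mk' hzz')

end Simplex

section FaceTrace

variable {d : ℕ} {B : AffineBasis (Fin (d + 1)) ℝ (Euc d)} {z z' : Fin (d + 1)} {φ : Euc d → ℝ}
  {L : ℝ≥0} {κ : ℝ}

theorem energySq_interior_eq_setIntegral {s : Set (Euc d)} (hs : IsCompact s)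
    (hconv : Convex ℝ s) (hφ : LipschitzWith L φ) (κ : ℝ) :
    energySq κ (interior s) φ = ∫ x in s, energyDensity κ φ x := by
  have hae : interior s =ᵐ[volume] s :=
    interior_ae_eq_of_null_frontier (hconv.addHaar_frontier volume)
  have hgrad (x : Euc d) : ‖gradient φ x‖ = ‖fderiv ℝ φ x‖ := LinearIsometryEquiv.norm_map _ _
  simp only [energySq, gradSq, sqIntg, hgrad, energyDensity]
  rw [setIntegral_congr_set hae, setIntegral_congr_set hae, ← integral_const_mul, ← integral_add]
  · exact integrableOn_norm_fderiv_sq_of_lipschitzWith hφ hs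
  · exact ((hφ.continuous.pow 2).continuousOn.integrableOn_compact hs).const_mul _

theorem setLIntegral_simFace_sq_le (hzz' : z ≠ z') (hφ : LipschitzWith L φ)
    (hzero : ∀ x ∈ simFace B z', φ x = 0) (hκ : 0 < κ) :
    ∫⁻ x in simFace B z, ENNReal.ofReal (φ x ^ 2) ∂μHE[d - 1] ≤
      ENNReal.ofReal (min (diam (simT B)) κ⁻¹) *
        (ENNReal.ofReal (diam (simT B) * ‖coordGradient B z‖) *
          ∫⁻ y in simT B, ENNReal.ofReal (energyDensity κ φ y)) := by
  have hdiam : ‖B z - B z'‖ ≤ diam (simT B) := norm_edge_le_diam_simT B z z'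
  have hray : ∀ x ∈ simFace B z, ∃ s ∈ Icc (0 : ℝ) 1, φ (x + s • (B z - B z')) = 0 ∧
      ∀ t ∈ Ioc 0 s, x + t • (B z - B z') ∈ simT B := by
    intro x hx
    have hxT : x ∈ simT B := mem_simT_iff.2 (mem_simFace_iff.1 hx).1
    exact ⟨B.coord z' x, ⟨mem_simT_iff.1 hxT z', coord_le_one_of_mem_simT hxT z'⟩,
      hzero _ (add_coord_smul_edge_mem_simFace hzz' hxT),
      fun t ht => add_smul_edge_mem_simT hzz' hxT (Ioc_subset_Icc_self ht)⟩
  have htrace := setLIntegral_sq_le_of_inner_eq_one (inner_coordGradient_edge B hzz') hφ hκ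
    (isCompact_simFace B z).measurableSet (isCompact_simT B).measurableSet
    (simFace_subset_mk' hzz') hray
  rw [finrank_orthogonal_coordGradient hzz'] at htrace
  refine htrace.trans ?_
  gcongr

theorem setIntegral_simFace_sq_le (hzz' : z ≠ z') (hφ : LipschitzWith L φ)
    (hzero : ∀ x ∈ simFace B z', φ x = 0) (hκ : 0 < κ) :
    ∫ x in simFace B z, φ x ^ 2 ∂μHE[d - 1] ≤
      min (diam (simT B)) κ⁻¹ * (diam (simT B) * ‖coordGradient B z‖ *
        energySq κ (interior (simT B)) φ) := by
  have hmin : 0 ≤ min (diam (simT B)) κ⁻¹ := le_min diam_nonneg (inv_nonneg.2 hκ.le)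
  have hcompact := isCompact_simT B
  rw [energySq_interior_eq_setIntegral hcompact (convex_convexHull ℝ _) hφ,
    integral_eq_lintegral_of_nonneg_ae (ae_of_all _ fun x => sq_nonneg _)
      (hφ.continuous.pow 2).aestronglyMeasurable]
  have henergy : 0 ≤ ∫ x in simT B, energyDensity κ φ x :=
    integral_nonneg (energyDensity_nonneg κ φ)
  refine ENNReal.toReal_le_of_le_ofReal (by positivity) ?_
  rw [ENNReal.ofReal_mul hmin, ENNReal.ofReal_mul (by positivity),
    ofReal_integral_eq_lintegral_ofReal (integrableOn_energyDensity hφ hcompact κ)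
      (ae_of_all _ (energyDensity_nonneg κ φ))]
  exact setLIntegral_simFace_sq_le hzz' hφ hzero hκ

theorem setIntegral_simFace_le (hzz' : z ≠ z') (hφ : LipschitzWith L φ)
    (hzero : ∀ x ∈ simFace B z', φ x = 0) (hκ : 0 < κ) :
    ∫ x in simFace B z, φ x ∂μHE[d - 1] ≤
      √(diam (simT B) * ‖coordGradient B z‖) * √(μHE[d - 1].real (simFace B z)) *
        √(min (diam (simT B)) κ⁻¹) * √(energySq κ (interior (simT B)) φ) := by
  have : IsFiniteMeasure (μHE[d - 1].restrict (simFace B z)) :=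
    isFiniteMeasure_restrict.2 (euclideanHausdorffMeasure_simFace_lt_top hzz').ne
  obtain ⟨M, hM⟩ := (isCompact_simFace B z).exists_bound_of_continuousOn hφ.continuous.continuousOn
  have hL2 : MemLp φ 2 (μHE[d - 1].restrict (simFace B z)) :=
    .of_bound hφ.continuous.aestronglyMeasurable M
      (ae_restrict_of_forall_mem (isCompact_simFace B z).measurableSet hM)
  have hcs := sq_integral_le_measureReal_mul_integral_sq hL2
  have hmin : 0 ≤ min (diam (simT B)) κ⁻¹ := le_min diam_nonneg (inv_nonneg.2 hκ.le)
  rw [measureReal_restrict_apply_univ] at hcs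
  rw [← Real.sqrt_mul (by positivity), ← Real.sqrt_mul (by positivity),
    ← Real.sqrt_mul (by positivity)]
  refine Real.le_sqrt_of_sq_le (hcs.trans ?_)
  refine (mul_le_mul_of_nonneg_left (setIntegral_simFace_sq_le hzz' hφ hzero hκ)
    measureReal_nonneg).trans_eq ?_
  ring

end FaceTrace

theorem exists_hausdorffMeasure_eq_smul_euclideanHausdorffMeasure (X : Type*) [EMetricSpace X]
    [MeasurableSpace X] [BorelSpace X] (m : ℕ) :
    ∃ c : ℝ≥0, 0 < c ∧ (μH[m] : Measure X) = c • μHE[m] := by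
  have hne := Measure.addHaarScalarFactor_volume_hausdorffMeasure_ne_zero m
  exact ⟨_, inv_pos.2 (pos_iff_ne_zero.2 hne), by
    rw [Measure.euclideanHausdorffMeasure_def, inv_smul_smul₀ hne]⟩

theorem robust_face_trace_estimate_general (d : ℕ) (μ : ℝ) :
    ∃ C : ℝ, 0 < C ∧ ∀ κ : ℝ, 0 < κ →
      ∀ B : AffineBasis (Fin (d + 1)) ℝ (Euc d), ∀ z z' : Fin (d + 1), z ≠ z' →
        diam (simT B) * ‖coordGradient B z‖ ≤ μ →
          ∀ φ : Euc d → ℝ, (∃ L : ℝ≥0, LipschitzWith L φ) →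
            (∀ x ∈ simFace B z', φ x = 0) →
            (∫ x in simFace B z, φ x ∂(μH[(d : ℝ) - 1]))
              ≤ C * Real.sqrt (μH[(d : ℝ) - 1] (simFace B z)).toReal
                  * Real.sqrt (min (Metric.diam (simT B)) κ⁻¹)
                  * Real.sqrt (energySq κ (interior (simT B)) φ) := by
  obtain ⟨c, hc, hscale⟩ :=
    exists_hausdorffMeasure_eq_smul_euclideanHausdorffMeasure (Euc d) (d - 1)
  refine ⟨√c * √μ + 1, by positivity, fun κ hκ B z z' hzz' hμ φ ⟨L, hφ⟩ hzero => ?_⟩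
  have hd : 1 ≤ d := by have := z.isLt; have := z'.isLt; omega
  have hest := setIntegral_simFace_le hzz' hφ hzero hκ
  rw [← Nat.cast_pred hd, hscale, Measure.restrict_smul, integral_smul_nnreal_measure,
    ← measureReal_def, measureReal_nnreal_smul_apply, Real.sqrt_mul c.coe_nonneg,
    NNReal.smul_def, smul_eq_mul]
  calc (c : ℝ) * ∫ x in simFace B z, φ x ∂μHE[d - 1]
      ≤ c * (√μ * √(μHE[d - 1].real (simFace B z)) *
          √(min (diam (simT B)) κ⁻¹) * √(energySq κ (interior (simT B)) φ)) := by
        gcongr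
        exact hest.trans (by gcongr)
    _ = √c * √μ * (√c * √(μHE[d - 1].real (simFace B z))) *
          √(min (diam (simT B)) κ⁻¹) * √(energySq κ (interior (simT B)) φ) := by
        conv_lhs => rw [← Real.mul_self_sqrt c.coe_nonneg]
        ring
    _ ≤ _ := by
        gcongr
        exact le_add_of_nonneg_right zero_le_one

/-- robust face (trace) estimate on a simplex. For a nondegenerate
`d`-simplex `T` with shape parameter `≤ μ` and two distinct faces `F` (opposite vertex
`z`) and `F'` (opposite vertex `z'`), every Lipschitz `φ` vanishing on `F'` satisfies
`∫_F φ dH^{d−1} ≤ C |F|^{1/2} min{h_T, κ⁻¹}^{1/2} ‖φ‖_{E, int T}` with `C = C(d, μ)`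
independent of `κ`. -/
theorem robust_face_trace_estimate (d : ℕ) (hd : 2 ≤ d) (μ : ℝ) :
    ∃ C : ℝ, 0 < C ∧ ∀ κ : ℝ, 0 < κ →
      ∀ B : AffineBasis (Fin (d + 1)) ℝ (Euc d),
        Metric.diam (simT B) ≤ μ * inradius (simT B) →
        ∀ z z' : Fin (d + 1), z ≠ z' →
          ∀ φ : Euc d → ℝ, (∃ L : ℝ≥0, LipschitzWith L φ) →
            (∀ x ∈ simFace B z', φ x = 0) →
            (∫ x in simFace B z, φ x ∂(μH[(d : ℝ) - 1]))
              ≤ C * Real.sqrt (μH[(d : ℝ) - 1] (simFace B z)).toReal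
                  * Real.sqrt (min (Metric.diam (simT B)) κ⁻¹)
                  * Real.sqrt (energySq κ (interior (simT B)) φ) := by
  obtain ⟨C, hC, hest⟩ := robust_face_trace_estimate_general d |μ|
  exact ⟨C, hC, fun κ hκ B hB z z' hzz' =>
    hest κ hκ B z z' hzz' (diam_mul_norm_coordGradient_le hB z)⟩
end
end
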